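/- Consider an MDP congestion game in which each feasible set 𝒳(P^i, z₀^i) is nonempty, and whose cost vector ξ is continuously differentiable on a convex open set U containing D = ∏_i 𝒳(P^i, z₀^i) with Jacobian Dξ(x) symmetric positive definite for every x ∈ U. Then the game has exactly one Nash equilibrium. -/

import Mathlib

open Finset

/-- The feasible set 𝒳(P, z₀) of state-action distributions. -/
def Feas {S A : Type*} [Fintype S] [Fintype A] (T : ℕ)
    (P : Fin (T+1) → S → S → A → ℝ) (z0 : S → ℝ) :
    Set (Fin (T+1) → S → A → ℝ) :=
  {x | (∀ t s a, 0 ≤ x t s a) ∧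
    (∀ s, ∑ a, x 0 s a = z0 s) ∧
    ∀ (t : ℕ) (ht : t < T), ∀ s,
      ∑ s', ∑ a, P ⟨t+1, by omega⟩ s s' a * x ⟨t, by omega⟩ s' a
        = ∑ a, x ⟨t+1, by omega⟩ s a}

/-- `P` is a transition kernel: nonnegative, and column-stochastic for t ∈ {1,…,T}. -/
def IsKernel {S A : Type*} [Fintype S] (T : ℕ)
    (P : Fin (T+1) → S → S → A → ℝ) : Prop :=
  (∀ t s' s a, 0 ≤ P t s' s a) ∧
    ∀ t : Fin (T+1), t ≠ 0 → ∀ s a, ∑ s', P t s' s a = 1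

/-- Backwards recursion for Q-values: `Qaux T P c k` is the Q-value at time T - k. -/
noncomputable def Qaux {S A : Type*} [Fintype S] [Fintype A] [Nonempty A] (T : ℕ)
    (P : Fin (T+1) → S → S → A → ℝ) (c : Fin (T+1) → S → A → ℝ) : ℕ → S → A → ℝ
  | 0, s, a => c (Fin.last T) s a
  | k+1, s, a =>
    c ⟨T - (k+1), by omega⟩ s a +
      ∑ s', P ⟨T - k, by omega⟩ s' s a *
        Finset.univ.inf' Finset.univ_nonempty (Qaux T P c k s')

/-- Q-values: `Q(T,s,a) = c(T,s,a)`,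
`Q(t-1,s,a) = c(t-1,s,a) + ∑_{s'} P(t,s',s,a) · min_{a'} Q(t,s',a')`. -/
noncomputable def Qval {S A : Type*} [Fintype S] [Fintype A] [Nonempty A] (T : ℕ)
    (P : Fin (T+1) → S → S → A → ℝ) (c : Fin (T+1) → S → A → ℝ)
    (t : Fin (T+1)) : S → A → ℝ :=
  Qaux T P c (T - t.1)

/-- x satisfies the Bellman condition for costs c:
every state-action pair played with positive probability achieves the minimal Q-value. -/
def BellmanCond {S A : Type*} [Fintype S] [Fintype A] [Nonempty A] (T : ℕ)
    (P : Fin (T+1) → S → S → A → ℝ) (c : Fin (T+1) → S → A → ℝ)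
    (x : Fin (T+1) → S → A → ℝ) : Prop :=
  ∀ t s a, 0 < x t s a →
    Qval T P c t s a = Finset.univ.inf' Finset.univ_nonempty (Qval T P c t s)

/-- Standard basis vector of the space of state-action functions. -/
def eb {S A : Type*} [DecidableEq S] [DecidableEq A] (T : ℕ)
    (t : Fin (T+1)) (s : S) (a : A) : Fin (T+1) → S → A → ℝ :=
  fun t' s' a' => if t' = t ∧ s' = s ∧ a' = a then 1 else 0

/-- Standard basis vector of the joint (N-player) space. -/
def ebN {S A : Type*} [DecidableEq S] [DecidableEq A] (N T : ℕ)
    (i : Fin N) (t : Fin (T+1)) (s : S) (a : A) :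
    Fin N → Fin (T+1) → S → A → ℝ :=
  fun j => if j = i then eb T t s a else 0

section helpers

variable {S A : Type*} [Fintype S] [Fintype A]

/-- The optimal value function. -/
noncomputable def Vval [Nonempty A] (T : ℕ)
    (P : Fin (T+1) → S → S → A → ℝ) (c : Fin (T+1) → S → A → ℝ)
    (t : Fin (T+1)) (s : S) : ℝ :=
  Finset.univ.inf' Finset.univ_nonempty (Qval T P c t s)

lemma Vval_le [Nonempty A] (T : ℕ)
    (P : Fin (T+1) → S → S → A → ℝ) (c : Fin (T+1) → S → A → ℝ)
    (t : Fin (T+1)) (s : S) (a : A) : Vval T P c t s ≤ Qval T P c t s a :=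
  Finset.inf'_le _ (Finset.mem_univ a)

lemma Qval_last [Nonempty A] (T : ℕ)
    (P : Fin (T+1) → S → S → A → ℝ) (c : Fin (T+1) → S → A → ℝ) (s : S) (a : A) :
    Qval T P c (Fin.last T) s a = c (Fin.last T) s a := by
  have h : T - (Fin.last T).1 = 0 := by simp
  unfold Qval
  rw [h, Qaux]

lemma Qval_castSucc [Nonempty A] (T : ℕ)
    (P : Fin (T+1) → S → S → A → ℝ) (c : Fin (T+1) → S → A → ℝ) (t : Fin T) (s : S) (a : A) :
    Qval T P c t.castSucc s a = c t.castSucc s a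
      + ∑ s', P t.succ s' s a * Vval T P c t.succ s' := by
  have ht := t.2
  obtain ⟨k, hk⟩ : ∃ k, k = T - (t.1 + 1) := ⟨_, rfl⟩
  have h1 : T - (t.castSucc).1 = k + 1 := by simp; omega
  have h2 : T - (t.succ).1 = k := by simp; omega
  unfold Vval Qval
  rw [h1, h2, Qaux]
  have e1 : (⟨T - (k+1), by omega⟩ : Fin (T+1)) = t.castSucc := by
    apply Fin.ext; simp; omega
  have e2 : (⟨T - k, by omega⟩ : Fin (T+1)) = t.succ := by
    apply Fin.ext; simp; omega
  rw [e1, e2]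

lemma feas_flow {T : ℕ} {P : Fin (T+1) → S → S → A → ℝ} {z0 : S → ℝ}
    {x : Fin (T+1) → S → A → ℝ} (hx : x ∈ Feas T P z0) (t : Fin T) (s : S) :
    ∑ s', ∑ a, P t.succ s s' a * x t.castSucc s' a = ∑ a, x t.succ s a :=
  hx.2.2 t.1 t.2 s

lemma cost_eq [Nonempty A] {T : ℕ} {P : Fin (T+1) → S → S → A → ℝ} {z0 : S → ℝ}
    (c : Fin (T+1) → S → A → ℝ)
    {x : Fin (T+1) → S → A → ℝ} (hx : x ∈ Feas T P z0) :
    ∑ t, ∑ s, ∑ a, c t s a * x t s a = ∑ s, Vval T P c 0 s * z0 s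
      + ∑ t, ∑ s, ∑ a, (Qval T P c t s a - Vval T P c t s) * x t s a := by
  have key : ∀ t : Fin T, ∑ s, ∑ a, c t.castSucc s a * x t.castSucc s a
      = ∑ s, ∑ a, Qval T P c t.castSucc s a * x t.castSucc s a
        - ∑ s, ∑ a, Vval T P c t.succ s * x t.succ s a := by
    intro t
    have : ∑ s, ∑ a, Vval T P c t.succ s * x t.succ s a
        = ∑ s, ∑ a, (∑ s', P t.succ s' s a * Vval T P c t.succ s') * x t.castSucc s a := by
      simp_rw [← Finset.mul_sum, ← feas_flow hx t, Finset.mul_sum, Finset.sum_mul]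
      rw [Finset.sum_comm]
      refine Finset.sum_congr rfl fun s _ => ?_
      rw [Finset.sum_comm]
      refine Finset.sum_congr rfl fun a _ => Finset.sum_congr rfl fun s' _ => ?_
      ring
    rw [this]
    simp_rw [Qval_castSucc, ← Finset.sum_sub_distrib]
    refine Finset.sum_congr rfl fun s _ => Finset.sum_congr rfl fun a _ => ?_
    ring
  have hV : ∑ t, ∑ s, ∑ a, Vval T P c t s * x t s a = ∑ s, Vval T P c 0 s * z0 s
      + ∑ t : Fin T, ∑ s, ∑ a, Vval T P c t.succ s * x t.succ s a := by
    rw [Fin.sum_univ_succ]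
    congr 1
    refine Finset.sum_congr rfl fun s _ => ?_
    rw [← Finset.mul_sum, hx.2.1 s]
  have hQ : ∑ t, ∑ s, ∑ a, c t s a * x t s a
      = ∑ t, ∑ s, ∑ a, Qval T P c t s a * x t s a
        - ∑ t : Fin T, ∑ s, ∑ a, Vval T P c t.succ s * x t.succ s a := by
    rw [Fin.sum_univ_castSucc, Fin.sum_univ_castSucc
      (f := fun t => ∑ s, ∑ a, Qval T P c t s a * x t s a)]
    simp_rw [key, Finset.sum_sub_distrib, Qval_last]
    ring
  simp_rw [sub_mul, Finset.sum_sub_distrib]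
  rw [hV, hQ]
  ring

/-- State distributions generated by a deterministic policy. -/
noncomputable def greedyMu (T : ℕ) (P : Fin (T+1) → S → S → A → ℝ) (z0 : S → ℝ)
    (g : Fin (T+1) → S → A) : ℕ → S → ℝ
  | 0, s => z0 s
  | n+1, s => ∑ s', if h : n + 1 < T + 1 then
      P ⟨n+1, h⟩ s s' (g ⟨n, by omega⟩ s') * greedyMu T P z0 g n s' else 0

lemma greedyMu_nonneg {T : ℕ} {P : Fin (T+1) → S → S → A → ℝ} (hP : IsKernel T P) {z0 : S → ℝ}
    (hz0 : ∀ s, 0 ≤ z0 s) (g : Fin (T+1) → S → A) (n : ℕ) (s : S) :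
    0 ≤ greedyMu T P z0 g n s := by
  induction n generalizing s with
  | zero => exact hz0 s
  | succ n ih =>
    rw [greedyMu]
    refine Finset.sum_nonneg fun s' _ => ?_
    split_ifs
    · exact mul_nonneg (hP.1 _ _ _ _) (ih s')
    · exact le_rfl

lemma exists_greedy [Nonempty A] {T : ℕ} {P : Fin (T+1) → S → S → A → ℝ} (hP : IsKernel T P)
    {z0 : S → ℝ} (hz0 : ∀ s, 0 ≤ z0 s) (c : Fin (T+1) → S → A → ℝ) :
    ∃ y ∈ Feas T P z0, ∑ t, ∑ s, ∑ a, c t s a * y t s a = ∑ s, Vval T P c 0 s * z0 s := by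
  classical
  have hg : ∀ t s, ∃ a, Vval T P c t s = Qval T P c t s a := fun t s => by
    obtain ⟨a, _, ha⟩ := Finset.exists_mem_eq_inf' Finset.univ_nonempty (Qval T P c t s)
    exact ⟨a, ha⟩
  choose g hg using hg
  let y : Fin (T+1) → S → A → ℝ := fun t s a =>
    if a = g t s then greedyMu T P z0 g t.1 s else 0
  have hy : y ∈ Feas T P z0 := by
    refine ⟨fun t s a => ?_, fun s => ?_, fun t ht s => ?_⟩
    · simp only [y]
      split_ifs
      · exact greedyMu_nonneg hP hz0 g _ _
      · exact le_rfl
    · simp [y, greedyMu]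
    · simp [y, greedyMu, ht]
  refine ⟨y, hy, ?_⟩
  rw [cost_eq c hy, add_eq_left]
  refine Finset.sum_eq_zero fun t _ => Finset.sum_eq_zero fun s _ =>
    Finset.sum_eq_zero fun a _ => ?_
  simp only [y]
  split_ifs with h
  · rw [h, hg, sub_self, zero_mul]
  · simp

lemma slack_nonneg [Nonempty A] {T : ℕ} {P : Fin (T+1) → S → S → A → ℝ} {z0 : S → ℝ}
    (c : Fin (T+1) → S → A → ℝ) {x : Fin (T+1) → S → A → ℝ} (hx : x ∈ Feas T P z0) (t s a) :
    0 ≤ (Qval T P c t s a - Vval T P c t s) * x t s a :=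
  mul_nonneg (sub_nonneg.2 (Vval_le T P c t s a)) (hx.1 t s a)

lemma bellman_of_min [Nonempty A] {T : ℕ} {P : Fin (T+1) → S → S → A → ℝ} (hP : IsKernel T P)
    {z0 : S → ℝ} (hz0 : ∀ s, 0 ≤ z0 s) (c : Fin (T+1) → S → A → ℝ)
    {x : Fin (T+1) → S → A → ℝ} (hx : x ∈ Feas T P z0)
    (hmin : ∀ y ∈ Feas T P z0,
      ∑ t, ∑ s, ∑ a, c t s a * x t s a ≤ ∑ t, ∑ s, ∑ a, c t s a * y t s a) :
    BellmanCond T P c x := by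
  obtain ⟨y, hy, hyc⟩ := exists_greedy hP hz0 c
  have h := hmin y hy
  rw [hyc, cost_eq c hx] at h
  have h0 := slack_nonneg c hx
  have hs : ∑ t, ∑ s, ∑ a, (Qval T P c t s a - Vval T P c t s) * x t s a = 0 :=
    le_antisymm (by linarith) (Finset.sum_nonneg fun t _ => Finset.sum_nonneg fun s _ =>
      Finset.sum_nonneg fun a _ => h0 t s a)
  intro t s a hpos
  rw [Finset.sum_eq_zero_iff_of_nonneg (fun t _ => Finset.sum_nonneg fun s _ =>
      Finset.sum_nonneg fun a _ => h0 t s a)] at hs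
  have hs := hs t (Finset.mem_univ t)
  rw [Finset.sum_eq_zero_iff_of_nonneg (fun s _ =>
      Finset.sum_nonneg fun a _ => h0 t s a)] at hs
  have hs := hs s (Finset.mem_univ s)
  rw [Finset.sum_eq_zero_iff_of_nonneg (fun a _ => h0 t s a)] at hs
  have hs := hs a (Finset.mem_univ a)
  rcases mul_eq_zero.1 hs with h | h
  · exact sub_eq_zero.1 h
  · exact absurd h hpos.ne'

lemma min_of_bellman [Nonempty A] {T : ℕ} {P : Fin (T+1) → S → S → A → ℝ}
    {z0 : S → ℝ} (c : Fin (T+1) → S → A → ℝ)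
    {x : Fin (T+1) → S → A → ℝ} (hx : x ∈ Feas T P z0) (hb : BellmanCond T P c x)
    {y : Fin (T+1) → S → A → ℝ} (hy : y ∈ Feas T P z0) :
      ∑ t, ∑ s, ∑ a, c t s a * x t s a ≤ ∑ t, ∑ s, ∑ a, c t s a * y t s a := by
  rw [cost_eq c hx, cost_eq c hy]
  have h0 : 0 ≤ ∑ t, ∑ s, ∑ a, (Qval T P c t s a - Vval T P c t s) * y t s a :=
    Finset.sum_nonneg fun t _ => Finset.sum_nonneg fun s _ =>
      Finset.sum_nonneg fun a _ => slack_nonneg c hy t s a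
  have h1 : ∑ t, ∑ s, ∑ a, (Qval T P c t s a - Vval T P c t s) * x t s a = 0 := by
    refine Finset.sum_eq_zero fun t _ => Finset.sum_eq_zero fun s _ =>
      Finset.sum_eq_zero fun a _ => ?_
    rcases (hx.1 t s a).eq_or_lt with h | h
    · rw [← h, mul_zero]
    · rw [hb t s a h, Vval, sub_self, zero_mul]
  linarith

lemma feas_mass {T : ℕ} {P : Fin (T+1) → S → S → A → ℝ} (hP : IsKernel T P)
    {z0 : S → ℝ} {x : Fin (T+1) → S → A → ℝ} (hx : x ∈ Feas T P z0) (t : Fin (T+1)) :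
    ∑ s, ∑ a, x t s a = ∑ s, z0 s := by
  induction t using Fin.induction with
  | zero => exact Finset.sum_congr rfl fun s _ => hx.2.1 s
  | succ t ih =>
    rw [← ih]
    simp_rw [← feas_flow hx t]
    rw [Finset.sum_comm]
    refine Finset.sum_congr rfl fun s _ => ?_
    rw [Finset.sum_comm]
    refine Finset.sum_congr rfl fun a _ => ?_
    rw [← Finset.sum_mul, hP.2 _ (Fin.succ_ne_zero t), one_mul]

lemma feas_closed (T : ℕ) (P : Fin (T+1) → S → S → A → ℝ) (z0 : S → ℝ) :
    IsClosed (Feas T P z0) := by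
  have h1 : IsClosed {x : Fin (T+1) → S → A → ℝ | ∀ t s a, 0 ≤ x t s a} := by
    simp only [Set.ofPred_forall]
    exact isClosed_iInter fun t => isClosed_iInter fun s => isClosed_iInter fun a =>
      isClosed_le (by fun_prop) (by fun_prop)
  have h2 : IsClosed {x : Fin (T+1) → S → A → ℝ | ∀ s, ∑ a, x 0 s a = z0 s} := by
    simp only [Set.ofPred_forall]
    exact isClosed_iInter fun t => isClosed_eq (by fun_prop) (by fun_prop)
  have h3 : IsClosed {x : Fin (T+1) → S → A → ℝ | ∀ (t : ℕ) (ht : t < T), ∀ s,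
      ∑ s', ∑ a, P ⟨t+1, by omega⟩ s s' a * x ⟨t, by omega⟩ s' a
        = ∑ a, x ⟨t+1, by omega⟩ s a} := by
    simp only [Set.ofPred_forall]
    exact isClosed_iInter fun t => isClosed_iInter fun s => isClosed_iInter fun a =>
      isClosed_eq (by fun_prop) (by fun_prop)
  exact h1.inter (h2.inter h3)

lemma feas_compact {T : ℕ} {P : Fin (T+1) → S → S → A → ℝ} (hP : IsKernel T P) (z0 : S → ℝ) :
    IsCompact (Feas T P z0) := by
  refine IsCompact.of_isClosed_subset (s := Set.univ.pi fun _ => Set.univ.pi fun _ =>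
    Set.univ.pi fun _ => Set.Icc (0:ℝ) (∑ s, z0 s)) ?_ (feas_closed T P z0) ?_
  · exact isCompact_univ_pi fun _ => isCompact_univ_pi fun _ => isCompact_univ_pi fun _ =>
      isCompact_Icc
  · intro x hx t _ s _ a _
    refine ⟨hx.1 t s a, ?_⟩
    rw [← feas_mass hP hx t]
    calc x t s a ≤ ∑ a, x t s a :=
          Finset.single_le_sum (fun a _ => hx.1 t s a) (Finset.mem_univ a)
      _ ≤ _ := Finset.single_le_sum (f := fun s => ∑ a, x t s a)
          (fun s _ => Finset.sum_nonneg fun a _ => hx.1 t s a) (Finset.mem_univ s)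

lemma feas_convex (T : ℕ) (P : Fin (T+1) → S → S → A → ℝ) (z0 : S → ℝ) :
    Convex ℝ (Feas T P z0) := by
  intro x hx y hy p q hp hq hpq
  refine ⟨fun t s a => ?_, fun s => ?_, fun t ht s => ?_⟩
  · exact add_nonneg (mul_nonneg hp (hx.1 t s a)) (mul_nonneg hq (hy.1 t s a))
  · simp only [Pi.add_apply, Pi.smul_apply, smul_eq_mul, Finset.sum_add_distrib,
      ← Finset.mul_sum, hx.2.1, hy.2.1]
    rw [← add_mul, hpq, one_mul]
  · simp only [Pi.add_apply, Pi.smul_apply, smul_eq_mul, Finset.sum_add_distrib,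
      ← Finset.mul_sum, ← hx.2.2 t ht s, ← hy.2.2 t ht s, mul_add]
    simp only [Finset.mul_sum]
    congr 1 <;>
    · refine Finset.sum_congr rfl fun s _ => Finset.sum_congr rfl fun a _ => ?_
      ring

/-- The Euclidean pairing as a linear map into the dual. -/
noncomputable def pairB (S A : Type*) [Fintype S] [Fintype A] (N T : ℕ) :
    (Fin N → Fin (T+1) → S → A → ℝ) →L[ℝ] ((Fin N → Fin (T+1) → S → A → ℝ) →L[ℝ] ℝ) :=
  LinearMap.toContinuousLinearMap
    ((LinearMap.toContinuousLinearMap (𝕜 := ℝ) (E := Fin N → Fin (T+1) → S → A → ℝ)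
      (F' := ℝ)).toLinearMap ∘ₗ
      LinearMap.mk₂ ℝ (fun w v => ∑ i, ∑ t, ∑ s, ∑ a, w i t s a * v i t s a)
        (by intros; simp [add_mul, Finset.sum_add_distrib])
        (by intros; simp [Finset.mul_sum, mul_assoc])
        (by intros; simp [mul_add, Finset.sum_add_distrib])
        (by intros; simp [Finset.mul_sum, mul_left_comm]))

lemma pairB_apply (N T : ℕ) (w v : Fin N → Fin (T+1) → S → A → ℝ) :
    pairB S A N T w v = ∑ i, ∑ t, ∑ s, ∑ a, w i t s a * v i t s a := rfl

lemma expand [DecidableEq S] [DecidableEq A] (N T : ℕ) (v : Fin N → Fin (T+1) → S → A → ℝ) :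
    v = ∑ q : Fin N × Fin (T+1) × S × A, v q.1 q.2.1 q.2.2.1 q.2.2.2 •
      ebN N T q.1 q.2.1 q.2.2.1 q.2.2.2 := by
  funext i t s a
  simp only [Finset.sum_apply, Pi.smul_apply, smul_eq_mul]
  rw [Finset.sum_eq_single (i, t, s, a)]
  · simp [ebN, eb]
  · rintro ⟨j, t', s', a'⟩ _ hne
    by_cases hj : i = j
    · subst hj
      have : ¬ (t = t' ∧ s = s' ∧ a = a') := by
        rintro ⟨rfl, rfl, rfl⟩
        exact hne rfl
      simp [ebN, eb, this]
    · simp [ebN, hj]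
  · simp

lemma pairB_symm [DecidableEq S] [DecidableEq A] (N T : ℕ)
    (L : (Fin N → Fin (T+1) → S → A → ℝ) →L[ℝ] (Fin N → Fin (T+1) → S → A → ℝ))
    (hL : ∀ i t s a, ∀ j t' s' a', L (ebN N T j t' s' a') i t s a
      = L (ebN N T i t s a) j t' s' a') (v w) :
    pairB S A N T (L v) w = pairB S A N T (L w) v := by
  have key : ∀ v w, pairB S A N T (L v) w = ∑ p : Fin N × Fin (T+1) × S × A,
      ∑ q : Fin N × Fin (T+1) × S × A, v q.1 q.2.1 q.2.2.1 q.2.2.2 *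
      L (ebN N T q.1 q.2.1 q.2.2.1 q.2.2.2) p.1 p.2.1 p.2.2.1 p.2.2.2 *
      w p.1 p.2.1 p.2.2.1 p.2.2.2 := by
    intro v w
    rw [pairB_apply]
    conv_lhs => rw [expand N T v]
    simp only [map_sum, map_smul, Finset.sum_apply, Pi.smul_apply, smul_eq_mul, Finset.sum_mul]
    rw [Fintype.sum_prod_type]
    refine Finset.sum_congr rfl fun i _ => ?_
    rw [Fintype.sum_prod_type]
    refine Finset.sum_congr rfl fun t _ => ?_
    rw [Fintype.sum_prod_type]
  rw [key, key, Finset.sum_comm]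
  refine Finset.sum_congr rfl fun p _ => Finset.sum_congr rfl fun q _ => ?_
  rw [hL]
  ring

end helpers

/-- An MDP congestion game with nonempty feasible sets whose cost vector ξ
is C¹ on a convex open set U ⊇ D = ∏ᵢ 𝒳(Pⁱ,z₀ⁱ) with symmetric positive definite
Jacobian on U has exactly one Nash equilibrium. -/
theorem stmt19 {S A : Type*} [Fintype S] [Fintype A] [Nonempty S] [Nonempty A]
    [DecidableEq S] [DecidableEq A] {T N : ℕ}
    (P : Fin N → Fin (T+1) → S → S → A → ℝ) (hP : ∀ i, IsKernel T (P i))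
    (z0 : Fin N → S → ℝ) (hz0 : ∀ i s, 0 ≤ z0 i s)
    (hne : ∀ i, (Feas T (P i) (z0 i)).Nonempty)
    (ξ : (Fin N → Fin (T+1) → S → A → ℝ) → (Fin N → Fin (T+1) → S → A → ℝ))
    (U : Set (Fin N → Fin (T+1) → S → A → ℝ)) (hUopen : IsOpen U) (hUconv : Convex ℝ U)
    (hDU : {x | ∀ i, x i ∈ Feas T (P i) (z0 i)} ⊆ U)
    (hC1 : ContDiffOn ℝ 1 ξ U)
    (hsymm : ∀ x ∈ U, ∀ i t s a, ∀ j t' s' a',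
      fderiv ℝ ξ x (ebN N T j t' s' a') i t s a
        = fderiv ℝ ξ x (ebN N T i t s a) j t' s' a')
    (hpd : ∀ x ∈ U, ∀ v : Fin N → Fin (T+1) → S → A → ℝ, v ≠ 0 →
      0 < ∑ i, ∑ t, ∑ s, ∑ a, v i t s a * fderiv ℝ ξ x v i t s a) :
    ∃! xhat : Fin N → Fin (T+1) → S → A → ℝ,
      (∀ i, xhat i ∈ Feas T (P i) (z0 i)) ∧
      ∀ i, BellmanCond T (P i) (fun t s a => ξ xhat i t s a) (xhat i) := by
  set D : Set (Fin N → Fin (T+1) → S → A → ℝ) := {x | ∀ i, x i ∈ Feas T (P i) (z0 i)} with hD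
  have hDpi : D = Set.univ.pi fun i => Feas T (P i) (z0 i) := by
    ext x; simp [hD]
  have hDconv : Convex ℝ D := by
    rw [hDpi]; exact convex_pi fun i _ => feas_convex T (P i) (z0 i)
  have hDcomp : IsCompact D := by
    rw [hDpi]; exact isCompact_univ_pi fun i => feas_compact (hP i) (z0 i)
  have hDne : D.Nonempty := ⟨fun i => (hne i).some, fun i => (hne i).some_mem⟩
  have hdiff : ∀ x ∈ U, HasFDerivAt ξ (fderiv ℝ ξ x) x := fun x hx =>
    ((hC1.differentiableOn one_ne_zero).differentiableAt (hUopen.mem_nhds hx)).hasFDerivAt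
  have hωd : ∀ x ∈ U, HasFDerivAt (fun x => pairB S A N T (ξ x))
      ((pairB S A N T).comp (fderiv ℝ ξ x)) x := fun x hx =>
    (pairB S A N T).hasFDerivAt.comp x (hdiff x hx)
  obtain ⟨f, hf⟩ := hUconv.exists_forall_hasFDerivAt_of_fderiv_symmetric
    (ω := fun x => pairB S A N T (ξ x)) hUopen
    (fun x hx => (hωd x hx).differentiableAt.differentiableWithinAt) (by
      intro x hx v w
      rw [(hωd x hx).fderiv]
      exact pairB_symm N T _ (hsymm x hx) v w)
  have hfc : ContinuousOn f D := fun x hx => (hf x (hDU hx)).continuousAt.continuousWithinAt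
  obtain ⟨x, hxD, hxmin⟩ := hDcomp.exists_isMinOn hDne hfc
  have hVI : ∀ y ∈ D, 0 ≤ pairB S A N T (ξ x) (y - x) := by
    intro y hy
    refine hxmin.localize.hasFDerivWithinAt_nonneg (hf x (hDU hxD)).hasFDerivWithinAt ?_
    exact sub_mem_posTangentConeAt_of_segment_subset (hDconv.segment_subset hxD hy)
  have hNashVI : ∀ y ∈ D, (∀ i, BellmanCond T (P i) (fun t s a => ξ y i t s a) (y i)) →
      ∀ w ∈ D, 0 ≤ pairB S A N T (ξ y) (w - y) := by
    intro y hy hb w hw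
    rw [map_sub, sub_nonneg, pairB_apply, pairB_apply]
    exact Finset.sum_le_sum fun i _ => min_of_bellman _ (hy i) (hb i) (hw i)
  have hxB : ∀ i, BellmanCond T (P i) (fun t s a => ξ x i t s a) (x i) := by
    intro i
    refine bellman_of_min (hP i) (hz0 i) _ (hxD i) fun y hy => ?_
    have h := hVI (Function.update x i y) (by
      intro j
      by_cases hj : j = i
      · subst hj; simpa using hy
      · simpa [hj] using hxD j)
    rw [pairB_apply, Finset.sum_eq_single i] at h
    · simp only [Pi.sub_apply, Function.update_self, mul_sub, Finset.sum_sub_distrib] at h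
      linarith
    · intro j _ hj
      simp [hj]
    · simp
  refine ⟨x, ⟨hxD, hxB⟩, ?_⟩
  rintro y ⟨hyD, hyB⟩
  by_contra hne'
  have hv : y - x ≠ 0 := sub_ne_zero.2 hne'
  have h1 := hVI y hyD
  have h2 := hNashVI y hyD hyB x hxD
  have h2' : pairB S A N T (ξ y) (y - x) ≤ 0 := by
    rw [← neg_sub, map_neg] at h2; linarith
  let γ : ℝ → (Fin N → Fin (T+1) → S → A → ℝ) := fun τ => x + τ • (y - x)
  have hγ : ∀ τ ∈ Set.Icc (0:ℝ) 1, γ τ ∈ U := fun τ hτ =>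
    hDU (hDconv.add_smul_sub_mem hxD hyD hτ)
  have hγd : ∀ τ, HasDerivAt γ (y - x) τ := fun τ => by
    have h := ((hasDerivAt_id τ).smul_const (y - x)).const_add x
    rw [one_smul] at h
    exact h
  let L := (pairB S A N T).flip (y - x)
  have hgd : ∀ τ ∈ Set.Icc (0:ℝ) 1, HasDerivAt (fun τ => L (ξ (γ τ)))
      (L (fderiv ℝ ξ (γ τ) (y - x))) τ := fun τ hτ =>
    L.hasFDerivAt.comp_hasDerivAt τ ((hdiff _ (hγ τ hτ)).comp_hasDerivAt τ (hγd τ))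
  obtain ⟨τ, hτ, hτe⟩ := exists_hasDerivAt_eq_slope (fun τ => L (ξ (γ τ)))
    (fun τ => L (fderiv ℝ ξ (γ τ) (y - x))) zero_lt_one
    (fun τ hτ => (hgd τ hτ).continuousAt.continuousWithinAt)
    (fun τ hτ => hgd τ (Set.Ioo_subset_Icc_self hτ))
  have hpos : 0 < L (fderiv ℝ ξ (γ τ) (y - x)) := by
    have := hpd (γ τ) (hγ τ (Set.Ioo_subset_Icc_self hτ)) (y - x) hv
    simp only [L, ContinuousLinearMap.flip_apply, pairB_apply]
    simpa only [mul_comm] using this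
  have e0 : γ 0 = x := by simp [γ]
  have e1 : γ 1 = y := by simp [γ]
  simp only [e0, e1, sub_zero, div_one] at hτe
  rw [hτe] at hpos
  simp only [L, ContinuousLinearMap.flip_apply] at hpos
  linarith
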